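/- Let f : ℝ^d → ℝ be differentiable and convex, with minimizer x* and optimal value f* = f(x*). Let x ∈ ℝ^d with ∇f(x) ≠ 0 and let x⁺ = x − η∇f(x) with the Polyak stepsize η = (f(x) − f*)/‖∇f(x)‖². Then ‖x⁺ − x*‖² ≤ ‖x − x*‖² − (f(x) − f*)²/‖∇f(x)‖². -/

import Mathlib

/-!
For a step `x⁺ = x - η g` with `g` a subgradient and `η ≥ 0`, expanding the square and applying the
subgradient inequality to the cross term gives
`‖x⁺ - z‖² ≤ ‖x - z‖² - 2 η (f x - f z) + η² ‖g‖²`. The Polyak stepsize with target `f z` is the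
minimizer of this quadratic in `η`, and its minimum is the claimed bound.
-/

local notation "⟪" x ", " y "⟫" => @inner ℝ _ _ x y

section SubgradientStep

variable {E : Type*} [NormedAddCommGroup E] [InnerProductSpace ℝ E]

theorem norm_sub_smul_sub_sq (x g z : E) (η : ℝ) :
    ‖x - η • g - z‖ ^ 2 = ‖x - z‖ ^ 2 - 2 * η * ⟪g, x - z⟫ + η ^ 2 * ‖g‖ ^ 2 := by
  rw [sub_right_comm, norm_sub_sq_real, real_inner_smul_right, real_inner_comm, norm_smul,
    mul_pow, Real.norm_eq_abs, sq_abs, mul_assoc]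

theorem norm_subgradient_step_sub_sq_le {f : E → ℝ} {x g z : E} {η : ℝ}
    (hsub : f x + ⟪g, z - x⟫ ≤ f z) (hη : 0 ≤ η) :
    ‖x - η • g - z‖ ^ 2 ≤ ‖x - z‖ ^ 2 - 2 * η * (f x - f z) + η ^ 2 * ‖g‖ ^ 2 := by
  have gap_le_inner : f x - f z ≤ ⟪g, x - z⟫ := by
    rw [← neg_sub x z, inner_neg_right] at hsub
    linarith
  rw [norm_sub_smul_sub_sq]
  gcongr

theorem polyak_step_convex_descent_general {f : E → ℝ} {x g z : E}
    (hsub : f x + ⟪g, z - x⟫ ≤ f z) (hz : f z ≤ f x) (hg : g ≠ 0) :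
    ‖x - ((f x - f z) / ‖g‖ ^ 2) • g - z‖ ^ 2
      ≤ ‖x - z‖ ^ 2 - (f x - f z) ^ 2 / ‖g‖ ^ 2 := by
  set η := (f x - f z) / ‖g‖ ^ 2 with η_def
  have η_nonneg : 0 ≤ η := div_nonneg (sub_nonneg.2 hz) (sq_nonneg _)
  have η_mul_norm_sq : η * ‖g‖ ^ 2 = f x - f z :=
    div_mul_cancel₀ _ (pow_ne_zero 2 (norm_ne_zero_iff.2 hg))
  calc ‖x - η • g - z‖ ^ 2
      ≤ ‖x - z‖ ^ 2 - 2 * η * (f x - f z) + η ^ 2 * ‖g‖ ^ 2 :=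
        norm_subgradient_step_sub_sq_le hsub η_nonneg
    _ = ‖x - z‖ ^ 2 - η * (f x - f z) := by
        linear_combination η * η_mul_norm_sq
    _ = ‖x - z‖ ^ 2 - (f x - f z) ^ 2 / ‖g‖ ^ 2 := by
        rw [η_def, div_mul_eq_mul_div, ← sq]

end SubgradientStep

/-- One gradient step with the Polyak stepsize on a convex differentiable
function decreases the squared distance to a minimizer by (f(x) - f*)²/‖∇f(x)‖². -/
theorem polyak_step_convex_descent
    (d : ℕ) (f : EuclideanSpace ℝ (Fin d) → ℝ)
    (hf : Differentiable ℝ f)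
    (hconv : ∀ x y : EuclideanSpace ℝ (Fin d),
      f y ≥ f x + ⟪gradient f x, y - x⟫)
    (xstar : EuclideanSpace ℝ (Fin d)) (hmin : ∀ z, f xstar ≤ f z)
    (x : EuclideanSpace ℝ (Fin d)) (hgrad : gradient f x ≠ 0) :
    ‖(x - ((f x - f xstar) / ‖gradient f x‖ ^ 2) • gradient f x) - xstar‖ ^ 2
      ≤ ‖x - xstar‖ ^ 2 - (f x - f xstar) ^ 2 / ‖gradient f x‖ ^ 2 :=
  polyak_step_convex_descent_general (hconv x xstar) (hmin x) hgrad
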